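/- Let q be an odd prime power with q ≡ 1 (mod 4), let k be a divisor of q−1 with 3 < k < q−1, suppose e = (q−1)/k is even, and let n be an odd positive integer. If (q,k) gives a 3-design, then (q^n,k) gives a 3-design (note k divides q^n − 1 and q^n ≡ 1 (mod 4)). -/

import Mathlib

/-!
Setting: `F` is a finite field of order `q`. The projective line `PG(1,q)` is
modelled as `Projectivization F (Fin 2 → F)`. Since scalar matrices act trivially
on the projective line, the images of a set under all elements of `SL(2,F)` form
exactly its `PSL(2,F)`-orbit; `mapSL g` is the map of the projective line induced
by `g : SL(2,F)`. For `k ∣ q - 1`, the unique subgroup of order `k` of `Fˣ` is the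
set of `k`-th roots of unity `{x : F | x ^ k = 1}`, embedded into the projective
line via `x ↦ [x : 1]`. `(q, k)` gives a 3-design iff there is `lam > 0` such that
every 3-subset of the projective line lies in exactly `lam` blocks of the orbit.
-/

noncomputable section

open Matrix

/-- The point at infinity `[1 : 0]` of the projective line over `F`. -/
def inftyPt (F : Type) [Field F] : Projectivization F (Fin 2 → F) :=
  Projectivization.mk F ![1, 0] (by
    intro h
    simpa using congrFun h 0)

/-- The embedding of `F` into the projective line, `x ↦ [x : 1]`. -/
def embedPt (F : Type) [Field F] (x : F) : Projectivization F (Fin 2 → F) :=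
  Projectivization.mk F ![x, 1] (by
    intro h
    simpa using congrFun h 1)

/-- The action of `g : SL(2,F)` on the projective line (as linear fractional
transformation). -/
def mapSL {F : Type} [Field F] (g : Matrix.SpecialLinearGroup (Fin 2) F) :
    Projectivization F (Fin 2 → F) → Projectivization F (Fin 2 → F) :=
  Projectivization.map (Matrix.SpecialLinearGroup.toLin' g : (Fin 2 → F) →ₗ[F] (Fin 2 → F))
    (Matrix.SpecialLinearGroup.toLin' g).injective

/-- The starter block: the unique subgroup of order `k` of `Fˣ` (the `k`-th roots
of unity, for `k ∣ q - 1`), regarded as a subset of the projective line. -/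
def starterB (F : Type) [Field F] (k : ℕ) : Set (Projectivization F (Fin 2 → F)) :=
  embedPt F '' {x : F | x ^ k = 1}

/-- The `PSL(2,F)`-orbit `GB` of the starter block. -/
def designBlocks (F : Type) [Field F] (k : ℕ) :
    Set (Set (Projectivization F (Fin 2 → F))) :=
  {S | ∃ g : Matrix.SpecialLinearGroup (Fin 2) F, S = mapSL g '' starterB F k}

/-- `GB` is the block set of a `3-(q+1, k, lam)` design: `lam` is positive and every
3-subset of the projective line is contained in exactly `lam` blocks. -/
def isThreeDesign (F : Type) [Field F] (k lam : ℕ) : Prop :=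
  0 < lam ∧
    ∀ T : Finset (Projectivization F (Fin 2 → F)), T.card = 3 →
      {S ∈ designBlocks F k | (T : Set (Projectivization F (Fin 2 → F))) ⊆ S}.ncard = lam

/-- `(q, k)` gives a 3-design. -/
def gives3Design (F : Type) [Field F] (k : ℕ) : Prop :=
  ∃ lam : ℕ, isThreeDesign F k lam

abbrev PL (F : Type) [Field F] := Projectivization F (Fin 2 → F)

def dd {F : Type} [Field F] (u v : Fin 2 → F) : F := u 0 * v 1 - u 1 * v 0

def DD {F : Type} [Field F] (u v w : Fin 2 → F) : F := dd u v * dd v w * dd w u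

section
variable {F : Type} [Field F]

lemma mapM_mk (M : Matrix (Fin 2) (Fin 2) F) (hM : Function.Injective (Matrix.toLin' M))
    (v : Fin 2 → F) (hv : v ≠ 0) (h') :
    Projectivization.map (Matrix.toLin' M) hM (Projectivization.mk F v hv) =
      Projectivization.mk F (M *ᵥ v) h' := rfl

lemma mapSL_mk (g : Matrix.SpecialLinearGroup (Fin 2) F)
    (v : Fin 2 → F) (hv : v ≠ 0) (h') :
    mapSL g (Projectivization.mk F v hv) =
      Projectivization.mk F ((g : Matrix (Fin 2) (Fin 2) F) *ᵥ v) h' := rfl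

lemma SL_ne (g : Matrix.SpecialLinearGroup (Fin 2) F)
    (v : Fin 2 → F) (hv : v ≠ 0) : ((g : Matrix (Fin 2) (Fin 2) F) *ᵥ v) ≠ 0 := by
  intro h
  apply hv
  have : Matrix.SpecialLinearGroup.toLin' g v = 0 := h
  simpa using this

lemma mapSL_inj (g : Matrix.SpecialLinearGroup (Fin 2) F) : Function.Injective (mapSL g) :=
  Projectivization.map_injective _ _

lemma mapSL_mul (g h : Matrix.SpecialLinearGroup (Fin 2) F) (p : PL F) :
    mapSL (g * h) p = mapSL g (mapSL h p) := by
  induction p using Projectivization.ind with | h v hv =>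
  rw [mapSL_mk h v hv (SL_ne h v hv), mapSL_mk g _ _ (SL_ne g _ (SL_ne h v hv)),
    mapSL_mk (g*h) v hv (SL_ne _ v hv)]
  congr 1
  rw [Matrix.mulVec_mulVec, Matrix.SpecialLinearGroup.coe_mul]

lemma dd_mul (M : Matrix (Fin 2) (Fin 2) F) (u v : Fin 2 → F) :
    dd (M *ᵥ u) (M *ᵥ v) = M.det * dd u v := by
  simp [dd, Matrix.mulVec, dotProduct, Fin.sum_univ_two, Matrix.det_fin_two]; ring

lemma DD_mul (M : Matrix (Fin 2) (Fin 2) F) (u v w : Fin 2 → F) :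
    DD (M *ᵥ u) (M *ᵥ v) (M *ᵥ w) = M.det ^ 3 * DD u v w := by
  simp only [DD, dd_mul]; ring

lemma DD_smul (a b c : F) (u v w : Fin 2 → F) :
    DD (a • u) (b • v) (c • w) = (a * b * c) ^ 2 * DD u v w := by
  simp [DD, dd]; ring

lemma dd_eq_zero {u v : Fin 2 → F} (hu : u ≠ 0) (hv : v ≠ 0) :
    dd u v = 0 ↔ Projectivization.mk F u hu = Projectivization.mk F v hv := by
  rw [Projectivization.mk_eq_mk_iff']
  constructor
  · intro h
    unfold dd at h
    by_cases h0 : v 0 = 0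
    · have h1 : v 1 ≠ 0 := by
        intro h1; apply hv; ext i; fin_cases i <;> simp [h0, h1]
      refine ⟨u 1 / v 1, ?_⟩
      ext i; fin_cases i
      · simp only [h0, mul_zero, sub_zero] at h
        have := (mul_eq_zero.mp h).resolve_right h1
        simp [h0, this]
      · simp [h1]
    · refine ⟨u 0 / v 0, ?_⟩
      ext i; fin_cases i
      · simp [h0]
      · simp only [Fin.mk_one, Pi.smul_apply, smul_eq_mul]
        field_simp
        linear_combination h
  · rintro ⟨a, rfl⟩
    simp [dd]; ring

lemma trans_aux {u v w u' v' w' : Fin 2 → F} (t : F) (ht : t ≠ 0)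
    (h : DD u v w * DD u' v' w' = t ^ 2) :
    ∃ g : Matrix.SpecialLinearGroup (Fin 2) F, ∃ a b c : F,
      a • u' = (g : Matrix (Fin 2) (Fin 2) F) *ᵥ u ∧
      b • v' = (g : Matrix (Fin 2) (Fin 2) F) *ᵥ v ∧
      c • w' = (g : Matrix (Fin 2) (Fin 2) F) *ᵥ w := by
  let al := dd w v
  let be := dd u w
  let al' := dd w' v'
  let be' := dd u' w'
  let M : Matrix (Fin 2) (Fin 2) F :=
    !![t⁻¹ * (al' * u' 0 * (be * v 1) - be' * v' 0 * (al * u 1)),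
       t⁻¹ * (- (al' * u' 0 * (be * v 0)) + be' * v' 0 * (al * u 0));
       t⁻¹ * (al' * u' 1 * (be * v 1) - be' * v' 1 * (al * u 1)),
       t⁻¹ * (- (al' * u' 1 * (be * v 0)) + be' * v' 1 * (al * u 0))]
  have hdet : M.det = 1 := by
    have : M.det = t⁻¹ ^ 2 * (DD u v w * DD u' v' w') := by
      simp only [M, Matrix.det_fin_two_of, al, be, al', be', DD, dd]; ring
    rw [this, h]; field_simp
  refine ⟨⟨M, hdet⟩, t⁻¹ * be * dd u v * al', t⁻¹ * al * dd u v * be', 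
    t⁻¹ * al * be * dd u' v', ?_, ?_, ?_⟩ <;>
  · ext i
    fin_cases i <;>
    · simp [M, Matrix.mulVec, dotProduct, Fin.sum_univ_two, al, be, al', be', dd]; ring

end

section
variable {F : Type} [Field F] [Fintype F] [DecidableEq F]

def cc (t : PL F × PL F × PL F) : ℤ :=
  quadraticChar F (DD t.1.rep t.2.1.rep t.2.2.rep)

lemma chi_sq_mul (a x : F) (ha : a ≠ 0) :
    quadraticChar F (a ^ 2 * x) = quadraticChar F x := by
  rw [map_mul, quadraticChar_sq_one' ha, one_mul]

lemma cc_mk (u v w : Fin 2 → F) (hu : u ≠ 0) (hv : v ≠ 0) (hw : w ≠ 0) :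
    cc (Projectivization.mk F u hu, Projectivization.mk F v hv, Projectivization.mk F w hw) =
      quadraticChar F (DD u v w) := by
  obtain ⟨a, ha⟩ := Projectivization.exists_smul_eq_mk_rep F u hu
  obtain ⟨b, hb⟩ := Projectivization.exists_smul_eq_mk_rep F v hv
  obtain ⟨c, hc⟩ := Projectivization.exists_smul_eq_mk_rep F w hw
  simp only [cc]
  rw [← ha, ← hb, ← hc]
  simp only [Units.smul_def]
  rw [DD_smul, chi_sq_mul]
  simp

lemma cc_ne_zero (p q r : PL F) : cc (p, q, r) ≠ 0 ↔ p ≠ q ∧ q ≠ r ∧ p ≠ r := by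
  induction p using Projectivization.ind with | h u hu =>
  induction q using Projectivization.ind with | h v hv =>
  induction r using Projectivization.ind with | h w hw =>
  rw [cc_mk, Ne, quadraticChar_eq_zero_iff, DD, mul_eq_zero, mul_eq_zero,
    dd_eq_zero hu hv, dd_eq_zero hv hw, dd_eq_zero hw hu]
  rw [eq_comm (a := Projectivization.mk F w hw)]
  tauto

lemma cc_mapSL (g : Matrix.SpecialLinearGroup (Fin 2) F) (p q r : PL F) :
    cc (mapSL g p, mapSL g q, mapSL g r) = cc (p, q, r) := by
  induction p using Projectivization.ind with | h u hu =>
  induction q using Projectivization.ind with | h v hv =>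
  induction r using Projectivization.ind with | h w hw =>
  rw [mapSL_mk g u hu (SL_ne g u hu), mapSL_mk g v hv (SL_ne g v hv),
    mapSL_mk g w hw (SL_ne g w hw), cc_mk, cc_mk, DD_mul]
  simp

lemma cc_trans (p q r p' q' r' : PL F) (h0 : cc (p, q, r) ≠ 0)
    (h : cc (p, q, r) = cc (p', q', r')) :
    ∃ g : Matrix.SpecialLinearGroup (Fin 2) F, mapSL g p = p' ∧ mapSL g q = q' ∧
      mapSL g r = r' := by
  induction p using Projectivization.ind with | h u hu =>
  induction q using Projectivization.ind with | h v hv =>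
  induction r using Projectivization.ind with | h w hw =>
  induction p' using Projectivization.ind with | h u' hu' =>
  induction q' using Projectivization.ind with | h v' hv' =>
  induction r' using Projectivization.ind with | h w' hw' =>
  rw [cc_mk] at h0
  rw [cc_mk, cc_mk] at h
  have hD : DD u v w ≠ 0 := fun h' => h0 (by simp [h'])
  have hD' : DD u' v' w' ≠ 0 := fun h' => h0 (by rw [h]; simp [h'])
  have : quadraticChar F (DD u v w * DD u' v' w') = 1 := by
    rw [map_mul, ← h, ← sq, quadraticChar_sq_one hD]
  rw [quadraticChar_one_iff_isSquare (mul_ne_zero hD hD')] at this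
  obtain ⟨t, ht⟩ := this
  have ht0 : t ≠ 0 := by
    rintro rfl
    exact mul_ne_zero hD hD' (by simpa using ht)
  obtain ⟨g, a, b, c, h1, h2, h3⟩ := trans_aux t ht0 (by rw [ht, sq])
  refine ⟨g, ?_, ?_, ?_⟩
  · rw [mapSL_mk g u hu (SL_ne g u hu), Projectivization.mk_eq_mk_iff']; exact ⟨a, h1⟩
  · rw [mapSL_mk g v hv (SL_ne g v hv), Projectivization.mk_eq_mk_iff']; exact ⟨b, h2⟩
  · rw [mapSL_mk g w hw (SL_ne g w hw), Projectivization.mk_eq_mk_iff']; exact ⟨c, h3⟩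

lemma exists_flip (hF : ringChar F ≠ 2) : ∃ f : PL F → PL F, Function.Injective f ∧
    ∀ p q r, cc (f p, f q, f r) = - cc (p, q, r) := by
  obtain ⟨a, ha⟩ := quadraticChar_exists_neg_one hF
  have ha0 : a ≠ 0 := by rintro rfl; simp at ha
  let M : Matrix (Fin 2) (Fin 2) F := !![a, 0; 0, 1]
  have hdet : M.det = a := by simp [M, Matrix.det_fin_two_of]
  have hM : Function.Injective (Matrix.toLin' M) := by
    have : Function.Injective M.mulVec := by
      rw [Matrix.mulVec_injective_iff_isUnit, Matrix.isUnit_iff_isUnit_det, hdet]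
      exact ha0.isUnit
    exact this
  have hne : ∀ v : Fin 2 → F, v ≠ 0 → M *ᵥ v ≠ 0 := by
    intro v hv h
    apply hv
    apply hM
    simpa using h
  refine ⟨Projectivization.map (Matrix.toLin' M) hM, Projectivization.map_injective _ _, ?_⟩
  intro p q r
  induction p using Projectivization.ind with | h u hu =>
  induction q using Projectivization.ind with | h v hv =>
  induction r using Projectivization.ind with | h w hw =>
  rw [mapM_mk M hM u hu (hne u hu), mapM_mk M hM v hv (hne v hv),
    mapM_mk M hM w hw (hne w hw), cc_mk, cc_mk, DD_mul, hdet, map_mul, map_pow, ha]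
  norm_num

def Lam (k : ℕ) (t : PL F × PL F × PL F) : ℕ :=
  {S ∈ designBlocks F k | t.1 ∈ S ∧ t.2.1 ∈ S ∧ t.2.2 ∈ S}.ncard

lemma Lam_le (k : ℕ) (g : Matrix.SpecialLinearGroup (Fin 2) F) (p q r : PL F) :
    Lam k (p, q, r) ≤ Lam k (mapSL g p, mapSL g q, mapSL g r) := by
  unfold Lam
  apply Set.ncard_le_ncard_of_injOn (fun S => mapSL g '' S)
  · rintro S ⟨⟨h, rfl⟩, h1, h2, h3⟩
    refine ⟨⟨g * h, ?_⟩, Set.mem_image_of_mem _ h1, Set.mem_image_of_mem _ h2,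
      Set.mem_image_of_mem _ h3⟩
    rw [Set.image_image]
    simp only [mapSL_mul]
  · exact (Set.image_injective.mpr (mapSL_inj g)).injOn

lemma Lam_eq (k : ℕ) (t t' : PL F × PL F × PL F) (h0 : cc t ≠ 0) (h : cc t = cc t') :
    Lam k t = Lam k t' := by
  obtain ⟨p, q, r⟩ := t
  obtain ⟨p', q', r'⟩ := t'
  apply le_antisymm
  · obtain ⟨g, rfl, rfl, rfl⟩ := cc_trans _ _ _ _ _ _ h0 h
    apply Lam_le
  · obtain ⟨g, rfl, rfl, rfl⟩ := cc_trans _ _ _ _ _ _ (h ▸ h0) h.symm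
    apply Lam_le

lemma design_iff (k lam : ℕ) : isThreeDesign F k lam ↔
    0 < lam ∧ ∀ t : PL F × PL F × PL F, cc t ≠ 0 → Lam k t = lam := by
  classical
  unfold isThreeDesign
  refine and_congr_right fun _ => ⟨?_, ?_⟩
  · rintro h ⟨p, q, r⟩ ht
    rw [cc_ne_zero] at ht
    have := h {p, q, r} (Finset.card_eq_three.mpr ⟨p, q, r, ht.1, ht.2.2, ht.2.1, rfl⟩)
    rw [← this]
    simp [Lam, Set.insert_subset_iff]
  · intro h T hT
    obtain ⟨p, q, r, h1, h2, h3, rfl⟩ := Finset.card_eq_three.mp hT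
    rw [← h (p, q, r) ((cc_ne_zero _ _ _).mpr ⟨h1, h3, h2⟩)]
    simp [Lam, Set.insert_subset_iff]

instance : Fintype (PL F) := Fintype.ofFinite _

open Classical in
def CB (F : Type) [Field F] [Fintype F] [DecidableEq F] (k : ℕ) : ℤ :=
  ∑ t : PL F × PL F × PL F,
    if t.1 ∈ starterB F k ∧ t.2.1 ∈ starterB F k ∧ t.2.2 ∈ starterB F k then cc t else 0

lemma sum_cc (hF : ringChar F ≠ 2) : ∑ t : PL F × PL F × PL F, cc t = 0 := by
  obtain ⟨f, hf, h⟩ := exists_flip (F := F) hF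
  have hb : Function.Bijective (Prod.map f (Prod.map f f)) :=
    Finite.injective_iff_bijective.mp (hf.prodMap (hf.prodMap hf))
  have := hb.sum_comp (fun t => cc t)
  have h2 : ∀ t, cc (Prod.map f (Prod.map f f) t) = - cc t := fun t => h _ _ _
  simp only [h2, Finset.sum_neg_distrib] at this
  linarith

lemma sum_ccLam (k : ℕ) : ∑ t : PL F × PL F × PL F, cc t * (Lam k t : ℤ) =
    ((designBlocks F k).ncard : ℤ) * CB F k := by
  classical
  have hfin : (designBlocks F k).Finite := Set.toFinite _
  have h1 : ∀ t : PL F × PL F × PL F, cc t * (Lam k t : ℤ) =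
      ∑ S ∈ hfin.toFinset, if t.1 ∈ S ∧ t.2.1 ∈ S ∧ t.2.2 ∈ S then cc t else 0 := by
    intro t
    rw [← Finset.sum_filter, Finset.sum_const, nsmul_eq_mul, mul_comm]
    congr 2
    unfold Lam
    rw [← Set.ncard_coe_finset]
    congr 1
    ext S; simp
  simp only [h1]
  rw [Finset.sum_comm, Set.ncard_eq_toFinset_card _ hfin, ← nsmul_eq_mul]
  apply Finset.sum_eq_card_nsmul
  intro S hS
  rw [Set.Finite.mem_toFinset] at hS
  obtain ⟨g, rfl⟩ := hS
  have hf := mapSL_inj g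
  have hb : Function.Bijective (Prod.map (mapSL g) (Prod.map (mapSL g) (mapSL g))) :=
    Finite.injective_iff_bijective.mp (hf.prodMap (hf.prodMap hf))
  rw [← hb.sum_comp]
  unfold CB
  apply Finset.sum_congr rfl
  rintro ⟨p, q, r⟩ _
  simp only [Prod.map_apply, hf.mem_set_image, cc_mapSL]

lemma blocks_pos (k : ℕ) : 0 < (designBlocks F k).ncard := by
  rw [Set.ncard_pos (Set.toFinite _)]
  exact ⟨_, 1, rfl⟩

lemma CB_of_design (hF : ringChar F ≠ 2) (k : ℕ) (h : gives3Design F k) : CB F k = 0 := by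
  obtain ⟨lam, h⟩ := h
  rw [design_iff] at h
  have h1 := sum_ccLam (F := F) k
  have h2 : ∀ t : PL F × PL F × PL F, cc t * (Lam k t : ℤ) = cc t * lam := by
    intro t
    by_cases h0 : cc t = 0
    · simp [h0]
    · rw [h.2 t h0]
  simp only [h2] at h1
  rw [← Finset.sum_mul, sum_cc hF, zero_mul] at h1
  have := blocks_pos (F := F) k
  rcases mul_eq_zero.mp h1.symm with h3 | h3
  · exfalso; norm_cast at h3; omega
  · exact h3

lemma cc_cases (t : PL F × PL F × PL F) : cc t = 0 ∨ cc t = 1 ∨ cc t = -1 :=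
  quadraticChar_isQuadratic F _

lemma embed_inj : Function.Injective (embedPt F) := by
  intro x y h
  unfold embedPt at h
  rw [← dd_eq_zero] at h
  simp [dd] at h
  exact sub_eq_zero.mp h

lemma design_of_CB (hF : ringChar F ≠ 2) (k : ℕ)
    (x y z : F) (hx : x ^ k = 1) (hy : y ^ k = 1) (hz : z ^ k = 1)
    (hxy : x ≠ y) (hyz : y ≠ z) (hxz : x ≠ z)
    (h : CB F k = 0) : gives3Design F k := by
  obtain ⟨f, hf, hflip⟩ := exists_flip (F := F) hF
  set t0 : PL F × PL F × PL F := (embedPt F x, embedPt F y, embedPt F z) with ht0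
  set t1 : PL F × PL F × PL F := (f (embedPt F x), f (embedPt F y), f (embedPt F z)) with ht1
  have h01 : cc t1 = - cc t0 := hflip _ _ _
  have h0 : cc t0 ≠ 0 := by
    rw [ht0, cc_ne_zero]
    exact ⟨embed_inj.ne hxy, embed_inj.ne hyz, embed_inj.ne hxz⟩
  have hpos : 0 < Lam k t0 := by
    unfold Lam
    rw [Set.ncard_pos (Set.toFinite _)]
    refine ⟨starterB F k, ⟨1, ?_⟩, ⟨x, hx, rfl⟩, ⟨y, hy, rfl⟩, ⟨z, hz, rfl⟩⟩
    have : mapSL (1 : Matrix.SpecialLinearGroup (Fin 2) F) = id := by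
      funext p
      apply mapSL_inj 1
      rw [← mapSL_mul, one_mul, id]
    rw [this, Set.image_id]
  have hs : cc t0 * cc t0 = 1 := by
    rcases cc_cases t0 with h | h | h
    · exact absurd h h0
    · simp [h]
    · simp [h]
  have key : ∀ t : PL F × PL F × PL F, 2 * (cc t * (Lam k t : ℤ)) =
      cc t * ((Lam k t0 : ℤ) + Lam k t1) + cc t ^ 2 * (cc t0 * ((Lam k t0 : ℤ) - Lam k t1)) := by
    intro t
    by_cases hz : cc t = 0
    · simp [hz]
    · have : cc t = cc t0 ∨ cc t = cc t1 := by
        rcases cc_cases t with h | h | h <;> rcases cc_cases t0 with h' | h' | h' <;> omega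
      rcases this with h' | h'
      · rw [Lam_eq k t t0 hz h', h']
        linear_combination (-cc t0 * ((Lam k t0 : ℤ) - Lam k t1)) * hs
      · rw [Lam_eq k t t1 hz h', h', h01]
        linear_combination (-cc t0 * ((Lam k t0 : ℤ) - Lam k t1)) * hs
  have hsum := Finset.sum_congr (rfl : (Finset.univ : Finset (PL F × PL F × PL F)) = _)
    (fun t _ => key t)
  rw [← Finset.mul_sum, sum_ccLam, h, Finset.sum_add_distrib, ← Finset.sum_mul, sum_cc hF,
    ← Finset.sum_mul] at hsum
  have hp : 0 < ∑ t : PL F × PL F × PL F, cc t ^ 2 :=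
    Finset.sum_pos' (fun _ _ => sq_nonneg _) ⟨t0, Finset.mem_univ _, by positivity⟩
  have heq : Lam k t0 = Lam k t1 := by
    have h1 : (∑ t : PL F × PL F × PL F, cc t ^ 2) *
      (cc t0 * ((Lam k t0 : ℤ) - Lam k t1)) = 0 := by linarith
    have h2 := (mul_eq_zero.mp ((mul_eq_zero.mp h1).resolve_left hp.ne')).resolve_left h0
    omega
  refine ⟨Lam k t0, (design_iff k _).mpr ⟨hpos, ?_⟩⟩
  intro t hz
  have : cc t = cc t0 ∨ cc t = cc t1 := by
    rcases cc_cases t with h | h | h <;> rcases cc_cases t0 with h' | h' | h' <;> omega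
  rcases this with h' | h'
  · exact Lam_eq k t t0 hz h'
  · rw [heq]; exact Lam_eq k t t1 hz h'

lemma CB_eq (k : ℕ) (R : Finset F) (hR : ∀ x, x ∈ R ↔ x ^ k = 1) :
    CB F k = ∑ t ∈ R ×ˢ R ×ˢ R, quadraticChar F ((t.1 - t.2.1) * (t.2.1 - t.2.2) * (t.2.2 - t.1)) := by
  classical
  unfold CB
  rw [← Finset.sum_filter]
  symm
  have hi := embed_inj (F := F)
  apply Finset.sum_bij (fun t _ => (embedPt F t.1, embedPt F t.2.1, embedPt F t.2.2))
  · rintro ⟨x, y, z⟩ h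
    simp only [Finset.mem_product, hR] at h
    simp only [Finset.mem_filter, Finset.mem_univ, true_and]
    exact ⟨⟨x, h.1, rfl⟩, ⟨y, h.2.1, rfl⟩, ⟨z, h.2.2, rfl⟩⟩
  · rintro ⟨x, y, z⟩ _ ⟨x', y', z'⟩ _ h
    simp only [Prod.mk.injEq] at h ⊢
    exact ⟨hi h.1, hi h.2.1, hi h.2.2⟩
  · rintro ⟨p, q, r⟩ h
    simp only [Finset.mem_filter, Finset.mem_univ, true_and] at h
    obtain ⟨⟨x, hx, rfl⟩, ⟨y, hy, rfl⟩, ⟨z, hz, rfl⟩⟩ := h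
    refine ⟨(x, y, z), ?_, rfl⟩
    simp only [Finset.mem_product, hR]
    exact ⟨hx, hy, hz⟩
  · rintro ⟨x, y, z⟩ _
    simp only [embedPt]
    rw [cc_mk]
    simp [DD, dd]

end

lemma exists_hom (F F' : Type) [Field F] [Fintype F] [Field F'] [Fintype F']
    (n : ℕ) (h : Fintype.card F' = Fintype.card F ^ n) : Nonempty (F →+* F') := by
  obtain ⟨p, hp⟩ := CharP.exists F
  obtain ⟨p', hp'⟩ := CharP.exists F'
  obtain ⟨a, hpp, ha⟩ := FiniteField.card F p
  obtain ⟨b, hpp', hb⟩ := FiniteField.card F' p'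
  have : p = p' := by
    have h1 : p' ∣ p := by
      apply hpp'.dvd_of_dvd_pow (n := a * n)
      rw [pow_mul, ← ha, ← h, hb]
      exact dvd_pow_self _ b.ne_zero
    exact ((Nat.prime_dvd_prime_iff_eq hpp' hpp).mp h1).symm
  subst this
  haveI : Fact p.Prime := ⟨hpp⟩
  letI := ZMod.algebra F p
  letI := ZMod.algebra F' p
  have h1 : Module.finrank (ZMod p) F = a := by
    have := Module.card_eq_pow_finrank (K := ZMod p) (V := F)
    rw [ha, ZMod.card] at this
    exact (Nat.pow_right_injective hpp.two_le this).symm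
  have h2 : Module.finrank (ZMod p) F' = a * n := by
    have := Module.card_eq_pow_finrank (K := ZMod p) (V := F')
    rw [h, ha, ZMod.card, ← pow_mul] at this
    exact (Nat.pow_right_injective hpp.two_le this).symm
  obtain ⟨f⟩ := FiniteField.nonempty_algHom_of_finrank_dvd (F := ZMod p) (K := F) (L := F')
    (by rw [h1, h2]; exact dvd_mul_right _ _)
  exact ⟨f.toRingHom⟩

lemma char_transfer (F F' : Type) [Field F] [Fintype F] [DecidableEq F] [Field F'] [Fintype F']
    [DecidableEq F'] (n : ℕ) (h : Fintype.card F' = Fintype.card F ^ n) (hn : Odd n)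
    (hF : ringChar F ≠ 2) (hF' : ringChar F' ≠ 2) (i : F →+* F') (x : F) :
    quadraticChar F' (i x) = quadraticChar F x := by
  by_cases hx : x = 0
  · simp [hx]
  have hix : i x ≠ 0 := by simpa using hx
  have hodd : Odd (Fintype.card F) :=
    Nat.odd_iff.mpr (FiniteField.odd_card_of_char_ne_two hF)
  obtain ⟨m, hm, hm2⟩ : ∃ m, Odd m ∧ Fintype.card F ^ n / 2 = Fintype.card F / 2 * m := by
    refine ⟨∑ j ∈ Finset.range n, Fintype.card F ^ j, ?_, ?_⟩
    · rw [Finset.odd_sum_iff_odd_card_odd]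
      rw [Finset.filter_true_of_mem (fun j _ => hodd.pow)]
      simpa using hn
    · have h1 := Nat.geomSum_eq (m := Fintype.card F) Fintype.one_lt_card n
      obtain ⟨s, hs⟩ := hodd
      have h3 := Finset.sum_range_succ (fun j => Fintype.card F ^ j) n
      have h2 := geom_sum_mul_add (2 * s) n
      rw [← hs] at h2
      rw [← h2, hs]
      generalize (∑ j ∈ Finset.range n, (2 * s + 1) ^ j) = T
      have e1 : (T * (2 * s) + 1) / 2 = s * T := by
        rw [show T * (2 * s) = 2 * (s * T) by ring]; omega
      rw [e1]; congr 1; omega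
  rw [quadraticChar_eq_pow_of_char_ne_two hF hx, quadraticChar_eq_pow_of_char_ne_two hF' hix,
    h, hm2, ← map_pow, pow_mul]
  rcases FiniteField.pow_dichotomy hF hx with h1 | h1
  · simp [h1]
  · have := Ring.neg_one_ne_one_of_char_ne_two hF
    have hi : i (-1) ≠ 1 := by
      rw [← i.map_one]; exact fun h => this (i.injective h)
    rw [h1, hm.neg_one_pow, if_neg hi, if_neg this]

/-- Proposition 3.3: if `(q,k)` gives a 3-design, then so does `(q^n, k)` for odd
`n` (here `F'` is the field of order `q^n`). -/
theorem stmt_9 (F F' : Type) [Field F] [Fintype F] [DecidableEq F]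
    [Field F'] [Fintype F'] [DecidableEq F']
    (q k n : ℕ) (hq : Fintype.card F = q) (hq' : Fintype.card F' = q ^ n)
    (hqodd : Odd q) (hq4 : q % 4 = 1)
    (hkdvd : k ∣ q - 1) (hk3 : 3 < k) (hkq : k < q - 1)
    (he : Even ((q - 1) / k))
    (hn : Odd n) (hn0 : 0 < n)
    (hdes : gives3Design F k) :
    gives3Design F' k := by
  subst hq
  have hF : ringChar F ≠ 2 := by
    intro h
    have := FiniteField.even_card_iff_char_two.mp h
    rw [Nat.odd_iff] at hqodd; omega
  have hF' : ringChar F' ≠ 2 := by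
    intro h
    have h2 := FiniteField.even_card_iff_char_two.mp h
    have := hqodd.pow (n := n)
    rw [← hq', Nat.odd_iff] at this; omega
  obtain ⟨i⟩ := exists_hom F F' n hq'
  have hk0 : 0 < k := by omega
  obtain ⟨ζ, hζ⟩ : ∃ ζ : F, IsPrimitiveRoot ζ k := by
    obtain ⟨g, hg⟩ := IsCyclic.exists_ofOrder_eq_natCard (α := Fˣ)
    rw [Nat.card_eq_fintype_card, Fintype.card_units] at hg
    obtain ⟨e, he'⟩ := hkdvd
    have h1 : IsPrimitiveRoot (g : F) (Fintype.card F - 1) := by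
      rw [← hg]; exact (IsPrimitiveRoot.orderOf g).map_of_injective (f := Units.coeHom F) Units.val_injective
    exact ⟨(g : F) ^ e, h1.pow (by omega) (by rw [he', mul_comm])⟩
  have hζ' : IsPrimitiveRoot (i ζ) k := hζ.map_of_injective i.injective
  let R := Polynomial.nthRootsFinset k (1 : F)
  let R' := Polynomial.nthRootsFinset k (1 : F')
  have hR : ∀ x, x ∈ R ↔ x ^ k = 1 := fun x => Polynomial.mem_nthRootsFinset hk0 1
  have hR' : ∀ x, x ∈ R' ↔ x ^ k = 1 := fun x => Polynomial.mem_nthRootsFinset hk0 1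
  have hc : R.card = k := hζ.card_nthRootsFinset
  have hc' : R'.card = k := hζ'.card_nthRootsFinset
  have him : R.image i = R' := by
    apply Finset.eq_of_subset_of_card_le
    · intro y hy
      obtain ⟨x, hx, rfl⟩ := Finset.mem_image.mp hy
      rw [hR] at hx
      rw [hR', ← map_pow, hx, map_one]
    · rw [Finset.card_image_of_injective _ i.injective, hc, hc']
  have h0 := CB_of_design hF k hdes
  rw [CB_eq k R hR] at h0
  obtain ⟨x, y, z, hx, hy, hz, hxy, hxz, hyz⟩ := Finset.two_lt_card_iff.mp
    (show 2 < R'.card by omega)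
  refine design_of_CB hF' k x y z ((hR' x).mp hx) ((hR' y).mp hy) ((hR' z).mp hz) hxy hyz hxz ?_
  rw [CB_eq k R' hR', ← h0]
  symm
  have hi := i.injective
  apply Finset.sum_bij (fun t _ => (i t.1, i t.2.1, i t.2.2))
  · rintro ⟨x, y, z⟩ h
    simp only [Finset.mem_product] at h ⊢
    rw [← him]
    exact ⟨Finset.mem_image_of_mem _ h.1, Finset.mem_image_of_mem _ h.2.1,
      Finset.mem_image_of_mem _ h.2.2⟩
  · rintro ⟨x, y, z⟩ _ ⟨x', y', z'⟩ _ h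
    simp only [Prod.mk.injEq] at h ⊢
    exact ⟨hi h.1, hi h.2.1, hi h.2.2⟩
  · rintro ⟨p, q, r⟩ h
    simp only [Finset.mem_product, ← him, Finset.mem_image] at h
    obtain ⟨⟨x, hx, rfl⟩, ⟨y, hy, rfl⟩, ⟨z, hz, rfl⟩⟩ := h
    exact ⟨(x, y, z), by simp [hx, hy, hz], rfl⟩
  · rintro ⟨x, y, z⟩ _
    simp only [← map_sub, ← map_mul i]
    rw [char_transfer F F' n hq' hn hF hF' i]
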